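/- Assume a21 > 0 and a32 > 0. Let m, n be integers such that for every integer t ≥ 0 the matrix A_t = H(m − t, n) has one real eigenvalue and two non-real complex conjugate eigenvalues. Then for every ε > 0 there exists C > 0 such that for every integer t > C and every choice of eigenbasis (g1,g2,g3) for A_t, the convex hull of T_{A_t}((1,0,0)) ∪ T_{A_t}((a11,a21,0)) is contained in the ε-tubular neighborhood of the convex hull of the three points (1,0,0), (a11,a21,0), (−a11,−a21,0). -/

import Mathlib

open Polynomial

/-- A real 3×3 matrix has NRS-spectrum if its characteristic polynomial has one
real root and a pair of non-real complex conjugate roots. -/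
def HasNRSSpectrum (A : Matrix (Fin 3) (Fin 3) ℝ) : Prop :=
  ∃ (r : ℝ) (z : ℂ), z.im ≠ 0 ∧
    A.charpoly.map (algebraMap ℝ ℂ) =
      (X - C (r : ℂ)) * (X - C z) * (X - C ((starRingEnd ℂ) z))

/-- An eigenbasis (g1,g2,g3) for A: g1 is a real eigenvector and g2, g3 are the
real and imaginary parts of a complex eigenvector; the three vectors form a
basis of ℝ³. -/
def IsEigenbasis (A : Matrix (Fin 3) (Fin 3) ℝ) (g1 g2 g3 : Fin 3 → ℝ) : Prop :=
  g1 ≠ 0 ∧ (∃ r : ℝ, A.mulVec g1 = r • g1) ∧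
  (∃ (c : ℂ) (v : Fin 3 → ℂ), v ≠ 0 ∧
      (A.map (Complex.ofReal : ℝ → ℂ)).mulVec v = c • v ∧
      g2 = (fun i => (v i).re) ∧ g3 = (fun i => (v i).im)) ∧
  LinearIndependent ℝ ![g1, g2, g3]

/-- The Klein–Voronoi orbit T_A(v) of a point v = x·g1 + y·g2 + z·g3, written in
the eigenbasis (g1,g2,g3). -/
def KVorbit (g1 g2 g3 v : Fin 3 → ℝ) : Set (Fin 3 → ℝ) :=
  { p | ∃ x y z θ : ℝ, v = x • g1 + y • g2 + z • g3 ∧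
      p = x • g1 + (y * Real.cos θ + z * Real.sin θ) • g2 +
            (-y * Real.sin θ + z * Real.cos θ) • g3 }

/-- Euclidean distance on ℝ³ (as `Fin 3 → ℝ`). -/
noncomputable def euclDist (p q : Fin 3 → ℝ) : ℝ :=
  Real.sqrt (∑ i, (p i - q i) ^ 2)

/-- The ε-tubular neighborhood of a set: points at Euclidean distance < ε from it. -/
def tubNbhd (ε : ℝ) (S : Set (Fin 3 → ℝ)) : Set (Fin 3 → ℝ) :=
  { p | ∃ q ∈ S, euclDist p q < ε }

/-- The family H(m,n) of Hessenberg type ⟨a11,a21|a12,a22,a32⟩, over ℤ. -/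
def Hmat (a11 a12 a13 a21 a22 a23 a32 a33 m n : ℤ) : Matrix (Fin 3) (Fin 3) ℤ :=
  !![a11, a12, a11 * m + a12 * n + a13;
     a21, a22, a21 * m + a22 * n + a23;
     0,   a32, a32 * n + a33]

/-- A vector satisfying the last two eigenvector equations of an unreduced Hessenberg matrix
vanishes as soon as its last coordinate does. -/
theorem hessenberg_eigenvector_eq_zero {F : Type*} [Field F] {h21 h22 h23 h32 h33 l u0 u1 u2 : F}
    (h21_ne : h21 ≠ 0) (h32_ne : h32 ≠ 0)
    (e1 : h21 * u0 + h22 * u1 + h23 * u2 = l * u1) (e2 : h32 * u1 + h33 * u2 = l * u2)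
    (hu : u2 = 0) : u0 = 0 ∧ u1 = 0 := by
  subst hu
  have h1 : u1 = 0 := by simpa [h32_ne] using e2
  subst h1
  exact ⟨by simpa [h21_ne] using e1, rfl⟩

/-- An eigenvalue of an unreduced Hessenberg matrix of determinant one is a root of the
characteristic polynomial. -/
theorem hessenberg_eigenvalue_isRoot {F : Type*} [Field F]
    {h11 h12 h13 h21 h22 h23 h32 h33 l u0 u1 u2 : F}
    (h21_ne : h21 ≠ 0) (h32_ne : h32 ≠ 0)
    (hdet : h11 * (h22 * h33 - h23 * h32) - h21 * (h12 * h33 - h13 * h32) = 1)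
    (e0 : h11 * u0 + h12 * u1 + h13 * u2 = l * u0)
    (e1 : h21 * u0 + h22 * u1 + h23 * u2 = l * u1) (e2 : h32 * u1 + h33 * u2 = l * u2)
    (hu : ¬(u0 = 0 ∧ u1 = 0 ∧ u2 = 0)) :
    l ^ 3 - (h11 + h22 + h33) * l ^ 2 +
      (h11 * h22 - h12 * h21 + h11 * h33 + h22 * h33 - h23 * h32) * l - 1 = 0 := by
  have hu2 : u2 ≠ 0 := fun h => hu <| by
    have := hessenberg_eigenvector_eq_zero h21_ne h32_ne e1 e2 h
    exact ⟨this.1, this.2, h⟩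
  refine (mul_eq_zero.1 ?_).resolve_right hu2
  linear_combination (-(h21 * h32)) * e0 + (h11 - l) * h32 * e1
    - ((h11 - l) * (h22 - l) - h12 * h21) * e2 + u2 * hdet

/-- The action of an unreduced Hessenberg matrix of determinant one on an eigenbasis, together
with the relations between its eigenvalues `r`, `α ± β i` and its characteristic coefficients. -/
theorem IsEigenbasis.hessenberg_spectrum {h11 h12 h13 h21 h22 h23 h32 h33 : ℝ}
    (h21_ne : h21 ≠ 0) (h32_ne : h32 ≠ 0)
    (hdet : h11 * (h22 * h33 - h23 * h32) - h21 * (h12 * h33 - h13 * h32) = 1)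
    {g1 g2 g3 : Fin 3 → ℝ}
    (hg : IsEigenbasis !![h11, h12, h13; h21, h22, h23; 0, h32, h33] g1 g2 g3) :
    ∃ r α β : ℝ,
      (!![h11, h12, h13; h21, h22, h23; 0, h32, h33] : Matrix _ _ ℝ).mulVec g1 = r • g1 ∧
      (!![h11, h12, h13; h21, h22, h23; 0, h32, h33] : Matrix _ _ ℝ).mulVec g2
        = α • g2 - β • g3 ∧
      (!![h11, h12, h13; h21, h22, h23; 0, h32, h33] : Matrix _ _ ℝ).mulVec g3
        = β • g2 + α • g3 ∧
      r ^ 3 - (h11 + h22 + h33) * r ^ 2 +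
        (h11 * h22 - h12 * h21 + h11 * h33 + h22 * h33 - h23 * h32) * r - 1 = 0 ∧
      r + 2 * α = h11 + h22 + h33 ∧
      β ^ 2 = 3 * α ^ 2 - 2 * (h11 + h22 + h33) * α +
        (h11 * h22 - h12 * h21 + h11 * h33 + h22 * h33 - h23 * h32) := by
  obtain ⟨hg1, ⟨r, hr⟩, ⟨c, v, hv, hc, hg2, hg3⟩, hli⟩ := hg
  have hr0 := congrFun hr 0
  have hr1 := congrFun hr 1
  have hr2 := congrFun hr 2
  have hc0 := congrFun hc 0
  have hc1 := congrFun hc 1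
  have hc2 := congrFun hc 2
  simp [Matrix.mulVec, dotProduct, Fin.sum_univ_three] at hr0 hr1 hr2 hc0 hc1 hc2
  have hfr := hessenberg_eigenvalue_isRoot h21_ne h32_ne hdet hr0 hr1 hr2 (by
    rintro ⟨h0, h1, h2⟩
    exact hg1 (by ext i; fin_cases i <;> simpa))
  have hfc := hessenberg_eigenvalue_isRoot (F := ℂ) (Complex.ofReal_ne_zero.2 h21_ne)
    (Complex.ofReal_ne_zero.2 h32_ne) (by exact_mod_cast hdet) hc0 hc1 hc2 (by
    rintro ⟨h0, h1, h2⟩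
    exact hv (by ext i; fin_cases i <;> simpa))
  have c0r := congrArg Complex.re hc0
  have c0i := congrArg Complex.im hc0
  have c1r := congrArg Complex.re hc1
  have c1i := congrArg Complex.im hc1
  have c2r := congrArg Complex.re hc2
  have c2i := congrArg Complex.im hc2
  have fr := congrArg Complex.re hfc
  have fi := congrArg Complex.im hfc
  simp [pow_succ] at c0r c0i c1r c1i c2r c2i fr fi
  have hβ : c.im ≠ 0 := by
    intro hβ
    simp only [hβ, zero_mul, sub_zero, add_zero] at c0r c0i c1r c1i c2r c2i
    rw [Fintype.linearIndependent_iff] at hli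
    have key := hessenberg_eigenvector_eq_zero (l := c.re)
      (u0 := (v 0).re * (v 2).im - (v 0).im * (v 2).re)
      (u1 := (v 1).re * (v 2).im - (v 1).im * (v 2).re)
      (u2 := (v 2).re * (v 2).im - (v 2).im * (v 2).re) (h22 := h22) (h23 := h23) (h33 := h33)
      h21_ne h32_ne
      (by linear_combination (v 2).im * c1r - (v 2).re * c1i)
      (by linear_combination (v 2).im * c2r - (v 2).re * c2i) (by ring)
    have h := hli ![0, (v 2).im, -(v 2).re] (by
      rw [hg2, hg3]
      ext i
      fin_cases i <;> simp [Fin.sum_univ_three]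
      · linear_combination key.1
      · linear_combination key.2
      · ring)
    have him : (v 2).im = 0 := by simpa using h 1
    have hre : (v 2).re = 0 := by simpa using h 2
    have key' := hessenberg_eigenvector_eq_zero h21_ne h32_ne c1r c2r hre
    have h' := hli ![0, 1, 0] (by
      rw [hg2, hg3]
      ext i
      fin_cases i <;> simp [Fin.sum_univ_three, key'.1, key'.2, hre])
    simpa using h' 1
  have hβ2 : c.im ^ 2 = 3 * c.re ^ 2 - 2 * (h11 + h22 + h33) * c.re +
      (h11 * h22 - h12 * h21 + h11 * h33 + h22 * h33 - h23 * h32) := by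
    refine mul_left_cancel₀ hβ ?_
    linear_combination -fi
  refine ⟨r, c.re, c.im, hr, ?_, ?_, hfr, ?_, hβ2⟩
  · rw [hg2, hg3]
    ext i
    fin_cases i <;> simp [Matrix.mulVec, dotProduct, Fin.sum_univ_three] <;> assumption
  · rw [hg2, hg3]
    ext i
    fin_cases i <;> simp [Matrix.mulVec, dotProduct, Fin.sum_univ_three] <;> linarith
  · have hpos : (r - c.re) ^ 2 + c.im ^ 2 ≠ 0 := by positivity
    refine mul_left_cancel₀ hpos ?_
    linear_combination hfr - fr + (r - c.re) * hβ2

/-- Points of a Klein–Voronoi orbit expressed through powers of the matrix, where `u` is the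
component of `v` along the real eigenvector. -/
theorem KVorbit.exists_component {A : Matrix (Fin 3) (Fin 3) ℝ} {g1 g2 g3 v p : Fin 3 → ℝ}
    {r α β : ℝ} (h1 : A.mulVec g1 = r • g1) (h2 : A.mulVec g2 = α • g2 - β • g3)
    (h3 : A.mulVec g3 = β • g2 + α • g3) (hp : p ∈ KVorbit g1 g2 g3 v) :
    ∃ (u : Fin 3 → ℝ) (θ : ℝ),
      ((r - α) ^ 2 + β ^ 2) • u
        = A.mulVec (A.mulVec v) - (2 * α) • A.mulVec v + (α ^ 2 + β ^ 2) • v ∧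
      β • (p - u - Real.cos θ • (v - u))
        = Real.sin θ • (A.mulVec v - r • u - α • (v - u)) := by
  obtain ⟨x, y, z, θ, rfl, rfl⟩ := hp
  refine ⟨x • g1, θ, ?_, ?_⟩
  · simp only [Matrix.mulVec_add, Matrix.mulVec_sub, Matrix.mulVec_smul, h1, h2, h3]
    module
  · simp only [Matrix.mulVec_add, Matrix.mulVec_smul, h1, h2, h3]
    module

/-- Coordinatewise estimate for the distance of an orbit point to its limit. -/
theorem abs_mul_le_of_orbit_equations {B N Q δ k β Δ c s w a : ℝ} (hB : 1 ≤ B) (hN : 1 ≤ N)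
    (hQ : N ≤ Q) (hδ : Q * δ = k) (hΔ : β * (Δ - (1 - c) * δ) = s * (w - a * δ))
    (hβ : N ≤ |β|) (hc : |c| ≤ 1) (hs : |s| ≤ 1) (hk : |k| ≤ 6 * B ^ 2) (hw : |w| ≤ 2 * B ^ 2)
    (ha : |a| ≤ 2 * B) : |Δ| * N ≤ 26 * B ^ 3 := by
  have hδN : |δ| * N ≤ 6 * B ^ 2 := by
    calc |δ| * N ≤ |δ| * Q := by gcongr
      _ = |k| := by rw [← hδ, abs_mul, abs_of_nonneg (by linarith : 0 ≤ Q), mul_comm]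
      _ ≤ _ := hk
  have hδ1 : |δ| ≤ 6 * B ^ 2 := by nlinarith [abs_nonneg δ]
  have h1c : |1 - c| ≤ 2 := by
    rw [abs_le] at hc ⊢
    constructor <;> linarith
  have hrot : |Δ - (1 - c) * δ| * N ≤ 2 * B ^ 2 + 2 * B * (6 * B ^ 2) := by
    calc |Δ - (1 - c) * δ| * N ≤ |Δ - (1 - c) * δ| * |β| := by gcongr
      _ = |s| * |w - a * δ| := by rw [mul_comm, ← abs_mul, hΔ, abs_mul]
      _ ≤ 1 * (|w| + |a * δ|) := by gcongr; exact abs_sub _ _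
      _ = |w| + |a| * |δ| := by rw [abs_mul, one_mul]
      _ ≤ _ := by gcongr
  have htri : |Δ| ≤ |Δ - (1 - c) * δ| + |1 - c| * |δ| := by
    rw [← abs_mul]
    simpa using abs_add_le (Δ - (1 - c) * δ) ((1 - c) * δ)
  have h2 : |1 - c| * |δ| * N ≤ 2 * (6 * B ^ 2) := by
    rw [mul_assoc]
    gcongr
  have hB3 : B ^ 2 ≤ B ^ 3 := pow_le_pow_right₀ hB (by norm_num)
  nlinarith

/-- The sup-norm thickening of radius `ε / 2` lies in the Euclidean `ε`-neighborhood. -/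
theorem thickening_half_subset_tubNbhd {ε : ℝ} (hε : 0 < ε) (S : Set (Fin 3 → ℝ)) :
    Metric.thickening (ε / 2) S ⊆ tubNbhd ε S := by
  intro p hp
  obtain ⟨q, hq, hpq⟩ := Metric.mem_thickening_iff.1 hp
  refine ⟨q, hq, ?_⟩
  have h : ∀ i, (p i - q i) ^ 2 ≤ (ε / 2) ^ 2 := fun i => by
    refine sq_le_sq.2 ?_
    rw [abs_of_pos (half_pos hε), ← Real.dist_eq]
    exact (dist_le_pi_dist p q i).trans hpq.le
  rw [euclDist, Real.sqrt_lt' hε, Fin.sum_univ_three]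
  nlinarith [h 0, h 1, h 2]

/-- Bounds on the eigenvalues `r`, `α ± β i` in terms of the trace `τ` and a large second
characteristic coefficient `σ`. -/
theorem eigenvalue_bounds {r α β τ σ N : ℝ} (hr : r ^ 3 - τ * r ^ 2 + σ * r - 1 = 0)
    (hα : r + 2 * α = τ) (hβ : β ^ 2 = 3 * α ^ 2 - 2 * τ * α + σ) (hN : 1 ≤ N)
    (hσ : N ^ 2 + τ ^ 2 + 1 ≤ σ) :
    |r| ≤ 1 ∧ |α| ≤ |τ| + 1 ∧ N ≤ |β| ∧ N ≤ (r - α) ^ 2 + β ^ 2 := by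
  have hq : 1 ≤ r ^ 2 - τ * r + σ := by nlinarith [sq_nonneg (r - τ / 2), sq_nonneg τ]
  have hrq : r * (r ^ 2 - τ * r + σ) = 1 := by linear_combination hr
  have hr0 : 0 ≤ r := by
    by_contra! h
    nlinarith
  have hr1 : r ≤ 1 := by nlinarith
  have hβN : N ^ 2 ≤ β ^ 2 := by nlinarith [sq_nonneg (α - τ / 3), sq_nonneg τ]
  refine ⟨abs_le.2 ⟨by linarith, hr1⟩, ?_, ?_, ?_⟩
  · rw [abs_le]
    constructor <;> linarith [le_abs_self τ, neg_abs_le τ]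
  · exact (le_abs_self N).trans (sq_le_sq.1 hβN)
  · nlinarith [sq_nonneg (r - α)]

theorem abs_three_term_combination_le {x y z X Y Z d b e B : ℝ} (hx : |x| ≤ X) (hy : |y| ≤ Y)
    (hz : |z| ≤ Z) (hd : |d| ≤ B) (hb : |b| ≤ B) (he : |e| ≤ B) :
    |x * d + y * b + z * e| ≤ (X + Y + Z) * B := by
  calc |x * d + y * b + z * e| ≤ |x * d| + |y * b| + |z * e| := abs_add_three _ _ _
    _ = |x| * |d| + |y| * |b| + |z| * |e| := by simp only [abs_mul]
    _ ≤ X * B + Y * B + Z * B := by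
      have := (abs_nonneg x).trans hx
      have := (abs_nonneg y).trans hy
      have := (abs_nonneg z).trans hz
      gcongr
    _ = (X + Y + Z) * B := by ring

/-- For NRS-rays of direction (−1,0) of a general Hessenberg type: the convex
hull of the orbits of (1,0,0) and (a11,a21,0) eventually lies in the ε-tubular
neighborhood of the triangle (1,0,0), (a11,a21,0), (−a11,−a21,0). -/
theorem orbit_hull_flattens_general_dir_neg
    (a11 a12 a13 a21 a22 a23 a32 a33 : ℤ)
    (hdet : (Hmat a11 a12 a13 a21 a22 a23 a32 a33 0 0).det = 1)
    (ha21 : 0 < a21) (ha32 : 0 < a32) (m n : ℤ)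
    (hray : ∀ t : ℤ, 0 ≤ t →
      HasNRSSpectrum
        ((Hmat a11 a12 a13 a21 a22 a23 a32 a33 (m - t) n).map (Int.cast : ℤ → ℝ))) :
    ∀ ε : ℝ, 0 < ε → ∃ C : ℝ, 0 < C ∧
      ∀ t : ℤ, C < (t : ℝ) →
        ∀ g1 g2 g3 : Fin 3 → ℝ,
          IsEigenbasis
            ((Hmat a11 a12 a13 a21 a22 a23 a32 a33 (m - t) n).map (Int.cast : ℤ → ℝ))
            g1 g2 g3 →
          convexHull ℝ
              (KVorbit g1 g2 g3 ![1, 0, 0] ∪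
                KVorbit g1 g2 g3 ![(a11 : ℝ), (a21 : ℝ), 0]) ⊆
            tubNbhd ε
              (convexHull ℝ
                {![1, 0, 0], ![(a11 : ℝ), (a21 : ℝ), 0],
                  ![(-a11 : ℝ), (-a21 : ℝ), 0]}) := by
  intro ε hε
  set b : Fin 3 → ℝ := ![(a11 : ℝ), (a21 : ℝ), 0] with hb
  set e : Fin 3 → ℝ := ![1, 0, 0] with he
  set d : Fin 3 → ℝ := ![(a11 : ℝ) ^ 2 + a12 * a21, a21 * a11 + a22 * a21, a32 * a21] with hd
  set τ : ℝ := a11 + a22 + (a32 * n + a33) with hτ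
  obtain ⟨B, hB1, hBτ, hBe, hBb, hBd⟩ : ∃ B : ℝ, 1 ≤ B ∧ |τ| + 1 ≤ B ∧ (∀ i, |e i| ≤ B) ∧
      (∀ i, |b i| ≤ B) ∧ ∀ i, |d i| ≤ B := by
    refine ⟨1 + |τ| + ‖e‖ + ‖b‖ + ‖d‖, ?_, ?_, fun i => ?_, fun i => ?_, fun i => ?_⟩
    on_goal 3 => have hi := norm_le_pi_norm e i
    on_goal 4 => have hi := norm_le_pi_norm b i
    on_goal 5 => have hi := norm_le_pi_norm d i
    all_goals
      try rw [Real.norm_eq_abs] at hi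
      linarith [abs_nonneg τ, norm_nonneg e, norm_nonneg b, norm_nonneg d]
  obtain ⟨N, hN1, hNε⟩ : ∃ N : ℝ, 1 ≤ N ∧ 26 * B ^ 3 < ε / 2 * N := by
    refine ⟨1 + 26 * B ^ 3 / (ε / 2), ?_, ?_⟩
    · have : 0 ≤ 26 * B ^ 3 / (ε / 2) := by positivity
      linarith
    · field_simp
      linarith
  set σ₀ : ℝ := a11 * a22 - a12 * a21 + a11 * (a32 * n + a33) + a22 * (a32 * n + a33)
    - (a21 * m + a22 * n + a23) * a32 with hσ₀
  refine ⟨|N ^ 2 + τ ^ 2 + 1 - σ₀| + 1, by positivity, fun t ht g1 g2 g3 hg => ?_⟩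
  have h21 : (1 : ℝ) ≤ a21 := by exact_mod_cast ha21
  have h32 : (1 : ℝ) ≤ a32 := by exact_mod_cast ha32
  have hA : (Hmat a11 a12 a13 a21 a22 a23 a32 a33 (m - t) n).map (Int.cast : ℤ → ℝ) =
      !![(a11 : ℝ), a12, a11 * (m - t) + a12 * n + a13;
        a21, a22, a21 * (m - t) + a22 * n + a23; 0, a32, a32 * n + a33] := by
    ext i j
    fin_cases i <;> fin_cases j <;> simp [Hmat]
  have hdet' : (a11 : ℝ) * (a22 * (a32 * n + a33) - (a21 * (m - t) + a22 * n + a23) * a32) -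
      a21 * (a12 * (a32 * n + a33) - (a11 * (m - t) + a12 * n + a13) * a32) = 1 := by
    have h := congrArg (Int.cast : ℤ → ℝ) hdet
    simp [Hmat, Matrix.det_fin_three] at h
    linear_combination h
  rw [hA] at hg
  obtain ⟨r, α, β, hg1, hg2, hg3, hr, hα, hβ⟩ :=
    hg.hessenberg_spectrum (by positivity) (by positivity) hdet'
  set σ : ℝ := a11 * a22 - a12 * a21 + a11 * (a32 * n + a33) + a22 * (a32 * n + a33)
    - (a21 * (m - t) + a22 * n + a23) * a32 with hσ
  have hσN : N ^ 2 + τ ^ 2 + 1 ≤ σ := by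
    have h1 : σ = σ₀ + a21 * a32 * t := by
      rw [hσ, hσ₀]
      ring
    have h2 : (1 : ℝ) ≤ a21 * a32 := one_le_mul_of_one_le_of_one_le h21 h32
    have h3 : (t : ℝ) ≤ a21 * a32 * t :=
      le_mul_of_one_le_left ((by positivity : (0 : ℝ) ≤ _).trans ht.le) h2
    linarith [le_abs_self (N ^ 2 + τ ^ 2 + 1 - σ₀)]
  obtain ⟨hr1, hαB, hβN, hQ⟩ := eigenvalue_bounds hr hα hβ hN1 hσN
  replace hαB := hαB.trans hBτ
  have hσsum : 2 * r * α + (α ^ 2 + β ^ 2) = σ := by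
    rw [hβ, ← hα]
    ring
  have hra : |r - α| ≤ 2 * B := (abs_sub _ _).trans (by linarith)
  have hrα : |2 * (r * α)| ≤ 2 * B := by
    rw [abs_mul, abs_mul, abs_two]
    have := mul_le_mul hr1 hαB (abs_nonneg α) zero_le_one
    linarith
  have hr2 : |r ^ 2| ≤ 1 := by
    rw [abs_pow]
    exact pow_le_one₀ (abs_nonneg r) hr1
  have hα2 : |-(2 * α)| ≤ 2 * B := by
    rw [abs_neg, abs_mul, abs_two]
    linarith
  have hBB : B ≤ B ^ 2 := le_self_pow₀ hB1 two_ne_zero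
  set A : Matrix (Fin 3) (Fin 3) ℝ := !![(a11 : ℝ), a12, a11 * (m - t) + a12 * n + a13;
        a21, a22, a21 * (m - t) + a22 * n + a23; 0, a32, a32 * n + a33] with hAdef
  have hAe : A.mulVec e = b := by
    ext i
    fin_cases i <;> simp [hAdef, he, hb, Matrix.mulVec, dotProduct, Fin.sum_univ_three]
  have hAb : A.mulVec b = d := by
    ext i
    fin_cases i <;> simp [hAdef, hd, hb, Matrix.mulVec, dotProduct, Fin.sum_univ_three]
    ring
  have hAd : A.mulVec d = τ • d - σ • b + e := by
    ext i
    fin_cases i <;>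
      simp [hAdef, hd, hb, he, Matrix.mulVec, dotProduct, Fin.sum_univ_three, hσ, hτ]
    · linear_combination hdet'
    · ring
    · ring
  set S : Set (Fin 3 → ℝ) := {e, b, ![(-a11 : ℝ), (-a21 : ℝ), 0]} with hS
  have hclose : ∀ p q : Fin 3 → ℝ, q ∈ convexHull ℝ S → (∀ i, |p i - q i| * N ≤ 26 * B ^ 3) →
      p ∈ Metric.thickening (ε / 2) (convexHull ℝ S) := by
    intro p q hq h
    refine Metric.mem_thickening_iff.2 ⟨q, hq, (dist_pi_lt_iff (half_pos hε)).2 fun i => ?_⟩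
    rw [Real.dist_eq]
    exact lt_of_mul_lt_mul_right ((h i).trans_lt hNε) (by linarith)
  refine (convexHull_min ?_ ((convex_convexHull ℝ S).thickening (ε / 2))).trans
    (thickening_half_subset_tubNbhd hε _)
  rintro p (hp | hp)
  · obtain ⟨u, θ, hu, hpu⟩ := KVorbit.exists_component hg1 hg2 hg3 hp
    rw [hAe, hAb] at hu
    rw [hAe] at hpu
    refine hclose p e (subset_convexHull ℝ S (by simp [hS])) fun i => ?_
    have hui := congrFun hu i
    have hpi := congrFun hpu i
    simp only [Pi.smul_apply, Pi.add_apply, Pi.sub_apply, smul_eq_mul] at hui hpi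
    refine abs_mul_le_of_orbit_equations (δ := u i - e i) (c := Real.cos θ) (s := Real.sin θ)
      (k := d i - 2 * α * b i + (2 * (r * α) - r ^ 2) * e i) (w := b i - r * e i)
      hB1 hN1 hQ (by linear_combination hui) (by linear_combination hpi) hβN
      (Real.abs_cos_le_one θ) (Real.abs_sin_le_one θ) ?_ ?_ hra
    · have := abs_three_term_combination_le abs_one.le hα2
        ((abs_sub (2 * (r * α)) (r ^ 2)).trans (add_le_add hrα hr2)) (hBd i) (hBb i) (hBe i)
      refine (le_of_eq (congrArg _ (by ring))).trans (this.trans ?_)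
      linarith
    · have := abs_three_term_combination_le abs_zero.le abs_one.le ((abs_neg r).trans_le hr1)
        (hBd i) (hBb i) (hBe i)
      refine (le_of_eq (congrArg _ (by ring))).trans (this.trans ?_)
      linarith
  · obtain ⟨u, θ, hu, hpu⟩ := KVorbit.exists_component hg1 hg2 hg3 hp
    rw [hAb, hAd] at hu
    rw [hAb] at hpu
    refine hclose p (Real.cos θ • b) ?_ fun i => ?_
    · have hneg : ![(-a11 : ℝ), (-a21 : ℝ), 0] = -b := by
        ext i
        fin_cases i <;> simp [hb]
      have hmem : b ∈ convexHull ℝ S := subset_convexHull ℝ S (by simp [hS])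
      have hmem' : -b ∈ convexHull ℝ S := subset_convexHull ℝ S (by simp [hS, hneg])
      have := (convex_convexHull ℝ S) hmem hmem' (a := (1 + Real.cos θ) / 2)
        (b := (1 - Real.cos θ) / 2) (by linarith [Real.neg_one_le_cos θ])
        (by linarith [Real.cos_le_one θ]) (by ring)
      convert this using 1
      module
    have hui := congrFun hu i
    have hpi := congrFun hpu i
    simp only [Pi.smul_apply, Pi.add_apply, Pi.sub_apply, smul_eq_mul] at hui hpi ⊢
    refine abs_mul_le_of_orbit_equations (δ := u i) (c := Real.cos θ) (s := Real.sin θ)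
      (k := r * d i - 2 * (r * α) * b i + e i) (w := d i - α * b i)
      hB1 hN1 hQ (by linear_combination hui - d i * hα + b i * hσsum)
      (by linear_combination hpi) hβN
      (Real.abs_cos_le_one θ) (Real.abs_sin_le_one θ) ?_ ?_ hra
    · have := abs_three_term_combination_le hr1 ((abs_neg _).trans_le hrα) abs_one.le
        (hBd i) (hBb i) (hBe i)
      refine (le_of_eq (congrArg _ (by ring))).trans (this.trans ?_)
      linarith
    · have := abs_three_term_combination_le abs_one.le ((abs_neg α).trans_le hαB) abs_zero.le
        (hBd i) (hBb i) (hBe i)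
      refine (le_of_eq (congrArg _ (by ring))).trans (this.trans ?_)
      linarith
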